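/- Fix a field k and an integer n ≥ 0. The group K_0(V_k^{(n,n-1)}) is a free abelian group with one basis element for each class in B_n; explicitly, the class [X] of a variety X of dimension at most n equals the sum, over the n-dimensional irreducible components of X, of the basis elements corresponding to their birational isomorphism classes. In particular, K_0(V_k^{(n,n-1)}) is isomorphic to the direct sum of copies of ℤ indexed by B_n. -/

import Mathlib

open AlgebraicGeometry CategoryTheory CategoryTheory.Limits

noncomputable section

universe u

/-- A variety over a field `k`: a reduced separated scheme of finite type over `Spec k`. -/
structure Variety (k : Type u) [Field k] : Type (u + 1) where
  /-- the underlying scheme -/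
  toScheme : Scheme.{u}
  /-- the structure morphism to `Spec k` -/
  str : toScheme ⟶ Spec (CommRingCat.of k)
  reduced : IsReduced toScheme
  separated : IsSeparated str
  locallyOfFiniteType : LocallyOfFiniteType str
  quasiCompact : QuasiCompact str

namespace Variety

variable {k : Type u} [Field k]

/-- The dimension of a variety, i.e. the Krull dimension of its underlying space. -/
def dim (V : Variety k) : WithBot ℕ∞ := topologicalKrullDim V.toScheme

/-- `W` together with (implicitly) its two projections is a product of `X` and `Y`
over `k`, i.e. `W ≅ X ×ₖ Y`. -/
def IsProductOf (W X Y : Variety k) : Prop :=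
  ∃ e : W.toScheme ≅ Limits.pullback X.str Y.str,
    e.hom ≫ Limits.pullback.fst X.str Y.str ≫ X.str = W.str

/-- `A` is the affine line `𝔸¹` over `k`. -/
def IsAffLine (A : Variety k) : Prop :=
  ∃ e : A.toScheme ≅ Spec (CommRingCat.of (Polynomial k)),
    e.hom ≫ Spec.map (CommRingCat.ofHom (algebraMap k (Polynomial k))) = A.str

/-- `A` is affine `r`-space `𝔸^r` over `k`. -/
def IsAffSpace (r : ℕ) (A : Variety k) : Prop :=
  ∃ e : A.toScheme ≅ Spec (CommRingCat.of (MvPolynomial (Fin r) k)),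
    e.hom ≫ Spec.map (CommRingCat.ofHom (algebraMap k (MvPolynomial (Fin r) k))) = A.str

/-- A variety is smooth if its structure morphism is smooth. -/
def IsSmoothVar (V : Variety k) : Prop := IsSmooth V.str

/-- Projective `N`-space over `k`, as the `Proj` of a polynomial ring. -/
def ProjSpace (k : Type u) [Field k] (N : ℕ) : Scheme.{u} :=
  letI := MvPolynomial.gradedAlgebra (σ := Fin (N + 1)) (R := k)
  Proj (MvPolynomial.homogeneousSubmodule (Fin (N + 1)) k)

/-- The structure morphism of projective `N`-space over `k`. -/
def ProjSpace.str (k : Type u) [Field k] (N : ℕ) :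
    ProjSpace k N ⟶ Spec (CommRingCat.of k) :=
  letI := MvPolynomial.gradedAlgebra (σ := Fin (N + 1)) (R := k)
  Proj.toSpecZero (MvPolynomial.homogeneousSubmodule (Fin (N + 1)) k) ≫
    Spec.map (CommRingCat.ofHom
      (algebraMap k (MvPolynomial.homogeneousSubmodule (Fin (N + 1)) k 0)))

/-- `P` is projective `N`-space over `k`, as a variety. -/
def IsProjSpaceVar (N : ℕ) (P : Variety k) : Prop :=
  ∃ e : P.toScheme ≅ ProjSpace k N, e.hom ≫ ProjSpace.str k N = P.str

/-- A variety is projective if it admits a closed immersion into some `ℙ^N` over `k`. -/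
def IsProjectiveVar (V : Variety k) : Prop :=
  ∃ (N : ℕ) (i : V.toScheme ⟶ ProjSpace k N),
    IsClosedImmersion i ∧ i ≫ ProjSpace.str k N = V.str

/-- `X` and `Y` are birationally isomorphic over `k`:
some dense open subvarieties are isomorphic over `k`. -/
def BirEquiv (X Y : Variety k) : Prop :=
  ∃ (U : X.toScheme.Opens) (V : Y.toScheme.Opens),
    Dense (U : Set X.toScheme) ∧ Dense (V : Set Y.toScheme) ∧
    ∃ e : U.toScheme ≅ V.toScheme, e.hom ≫ V.ι ≫ Y.str = U.ι ≫ X.str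

/-- `X` and `Y` are stably birational: `X × 𝔸^r` and `Y × 𝔸^r` are birationally
isomorphic for some `r ≥ 0`. -/
def StablyBirational (X Y : Variety k) : Prop :=
  ∃ (r : ℕ) (A XA YA : Variety k),
    IsAffSpace r A ∧ IsProductOf XA X A ∧ IsProductOf YA Y A ∧ BirEquiv XA YA

/-- `X` and `Y` are piecewise isomorphic: they admit finite partitions into locally
closed subvarieties which are isomorphic over `k` piece by piece. -/
def PiecewiseIso (X Y : Variety k) : Prop :=
  ∃ (m : ℕ) (P Q : Fin m → Variety k)
    (f : ∀ i, (P i).toScheme ⟶ X.toScheme) (g : ∀ i, (Q i).toScheme ⟶ Y.toScheme),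
    (∀ i, IsImmersion (f i)) ∧ (∀ i, IsImmersion (g i)) ∧
    (∀ i, f i ≫ X.str = (P i).str) ∧ (∀ i, g i ≫ Y.str = (Q i).str) ∧
    (∀ i j, i ≠ j → Disjoint (Set.range (f i).base) (Set.range (f j).base)) ∧
    (∀ i j, i ≠ j → Disjoint (Set.range (g i).base) (Set.range (g j).base)) ∧
    (⋃ i, Set.range (f i).base) = Set.univ ∧
    (⋃ i, Set.range (g i).base) = Set.univ ∧
    ∀ i, ∃ e : (P i).toScheme ≅ (Q i).toScheme, e.hom ≫ (Q i).str = (P i).str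

/-- The set of generators of the scissor-type relations among varieties of the class `P`:
`[X] = [X']` for `X ≅ X'` over `k`, and `[X] = [Y] + [U]` whenever `Y` is a closed
subvariety of `X` and `U` is its open complement. -/
def cutRel (P : Variety k → Prop) : Set (FreeAbelianGroup {V : Variety k // P V}) :=
  {a | (∃ X Y : {V : Variety k // P V},
          (∃ e : X.1.toScheme ≅ Y.1.toScheme, e.hom ≫ Y.1.str = X.1.str) ∧
          a = FreeAbelianGroup.of X - FreeAbelianGroup.of Y) ∨
       (∃ (X Y U : {V : Variety k // P V}) (i : Y.1.toScheme ⟶ X.1.toScheme)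
          (j : U.1.toScheme ⟶ X.1.toScheme),
          IsClosedImmersion i ∧ IsOpenImmersion j ∧
          i ≫ X.1.str = Y.1.str ∧ j ≫ X.1.str = U.1.str ∧
          Set.range j.base = (Set.range i.base)ᶜ ∧
          a = FreeAbelianGroup.of X - FreeAbelianGroup.of Y - FreeAbelianGroup.of U)}

/-- The Grothendieck group of the class of varieties satisfying `P`: the free abelian
group on (isomorphism classes of) varieties satisfying `P`, modulo the relations
`[X] = [Y] + [X ∖ Y]` for closed subvarieties `Y` of `X`. -/
def K0 (k : Type u) [Field k] (P : Variety k → Prop) : Type (u + 1) :=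
  FreeAbelianGroup {V : Variety k // P V} ⧸ AddSubgroup.closure (cutRel P)

instance (P : Variety k → Prop) : AddCommGroup (K0 k P) :=
  QuotientAddGroup.Quotient.addCommGroup _

/-- The class of a variety in the Grothendieck group. -/
def K0.cls {P : Variety k → Prop} (V : Variety k) (hV : P V) : K0 k P :=
  QuotientAddGroup.mk (FreeAbelianGroup.of ⟨V, hV⟩)

/-- `K_0(V_k^{(n)})`: the Grothendieck group of varieties of dimension at most `n`. -/
abbrev K0le (k : Type u) [Field k] (n : ℕ) : Type (u + 1) :=
  K0 k (fun V => V.dim ≤ (n : WithBot ℕ∞))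

/-- `K_0[V_k]` (as an abelian group): the Grothendieck group of all varieties over `k`. -/
abbrev K0Var (k : Type u) [Field k] : Type (u + 1) := K0 k (fun _ => True)

/-- The class of a variety in `K_0[V_k]`. -/
def K0Var.cls (V : Variety k) : K0Var k := K0.cls V trivial

/-- `K_0(V_k^{(n,n-1)})`: the Grothendieck group of varieties of dimension at most `n`,
where moreover the class of every variety of dimension `< n` is set to `0`. -/
def K0graded (k : Type u) [Field k] (n : ℕ) : Type (u + 1) :=
  FreeAbelianGroup {V : Variety k // V.dim ≤ (n : WithBot ℕ∞)} ⧸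
    AddSubgroup.closure (cutRel (fun V => V.dim ≤ (n : WithBot ℕ∞)) ∪
      {a | ∃ X : {V : Variety k // V.dim ≤ (n : WithBot ℕ∞)},
        X.1.dim < (n : WithBot ℕ∞) ∧ a = FreeAbelianGroup.of X})

instance (n : ℕ) : AddCommGroup (K0graded k n) :=
  QuotientAddGroup.Quotient.addCommGroup _

/-- The class of a variety in `K_0(V_k^{(n,n-1)})`. -/
def K0graded.cls (n : ℕ) (V : Variety k) (hV : V.dim ≤ (n : WithBot ℕ∞)) : K0graded k n :=
  QuotientAddGroup.mk (FreeAbelianGroup.of ⟨V, hV⟩)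

/-- `x ∈ K_0(V_k^{(b)})` lies in the image of multiplication by `L = [𝔸¹]`, viewed as the
map `K_0(V_k^{(a)}) → K_0(V_k^{(b)})` sending `[Z]` to `[Z × 𝔸¹]`. -/
def InMulLImage (a b : ℕ) (x : K0le k b) : Prop :=
  ∃ (m : ℕ) (c : Fin m → ℤ) (Z W : Fin m → Variety k)
    (_ : ∀ i, (Z i).dim ≤ (a : WithBot ℕ∞)) (hW : ∀ i, (W i).dim ≤ (b : WithBot ℕ∞)),
    (∀ i, ∃ A : Variety k, IsAffLine A ∧ IsProductOf (W i) (Z i) A) ∧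
    x = ∑ i, c i • K0.cls (W i) (hW i)

/-- `L · χ = 0` in `K_0[V_k]`: there is a representation `χ = ∑ cᵢ [Zᵢ]` with
`∑ cᵢ [Zᵢ × 𝔸¹] = 0`. -/
def MulLZero (χ : K0Var k) : Prop :=
  ∃ (m : ℕ) (c : Fin m → ℤ) (Z W : Fin m → Variety k),
    (∀ i, ∃ A : Variety k, IsAffLine A ∧ IsProductOf (W i) (Z i) A) ∧
    χ = ∑ i, c i • K0Var.cls (Z i) ∧
    (0 : K0Var k) = ∑ i, c i • K0Var.cls (W i)

/-- The subgroup of `K_0[V_k]` of multiples of `L`, i.e. the ideal generated by `L`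
viewed as an additive subgroup. -/
def LMultiples (k : Type u) [Field k] : AddSubgroup (K0Var k) :=
  AddSubgroup.closure
    {y | ∃ (m : ℕ) (c : Fin m → ℤ) (Z W : Fin m → Variety k),
      (∀ i, ∃ A : Variety k, IsAffLine A ∧ IsProductOf (W i) (Z i) A) ∧
      y = ∑ i, c i • K0Var.cls (W i)}

/-- `Z` realizes the closed complement `X ∖ U` of the open `U ⊆ X` as a variety. -/
def IsComplementOf (Z X : Variety k) (U : X.toScheme.Opens) : Prop :=
  ∃ i : Z.toScheme ⟶ X.toScheme, IsClosedImmersion i ∧ i ≫ X.str = Z.str ∧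
    Set.range i.base = (U : Set X.toScheme)ᶜ

/-- The birational isomorphism between `n`-dimensional varieties `X ⇢ Y` represented by
an isomorphism `U → V` of open subvarieties is convenient:
`[X ∖ U] - [Y ∖ V]` lies in the image of `·L : K_0(V_k^{(n-2)}) → K_0(V_k^{(n-1)})`. -/
def ConvenientRep (n : ℕ) (X Y : Variety k) (U : X.toScheme.Opens)
    (V : Y.toScheme.Opens) : Prop :=
  ∀ (ZX ZY : Variety k) (hZX : ZX.dim ≤ ((n - 1 : ℕ) : WithBot ℕ∞))
    (hZY : ZY.dim ≤ ((n - 1 : ℕ) : WithBot ℕ∞)),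
    IsComplementOf ZX X U → IsComplementOf ZY Y V →
    InMulLImage (n - 2) (n - 1) (K0.cls ZX hZX - K0.cls ZY hZY)

/-- A field `k` is convenient if every birational isomorphism between smooth projective
varieties over `k` is convenient. -/
def ConvenientField (k : Type u) [Field k] : Prop :=
  ∀ (n : ℕ) (X Y : Variety k), IsSmoothVar X → IsSmoothVar Y →
    IsProjectiveVar X → IsProjectiveVar Y →
    IrreducibleSpace X.toScheme → IrreducibleSpace Y.toScheme →
    X.dim = (n : WithBot ℕ∞) → Y.dim = (n : WithBot ℕ∞) →
    ∀ (U : X.toScheme.Opens) (V : Y.toScheme.Opens),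
      Dense (U : Set X.toScheme) → Dense (V : Set Y.toScheme) →
      ∀ e : U.toScheme ≅ V.toScheme, e.hom ≫ V.ι ≫ Y.str = U.ι ≫ X.str →
      ConvenientRep n X Y U V

end Variety
namespace Variety

variable {k : Type u} [Field k]

/-- The type of birational isomorphism classes of irreducible `n`-dimensional
varieties over `k` (the set `B_n`). -/
def BirClass (k : Type u) [Field k] (n : ℕ) : Type (u + 1) :=
  Quot (fun X Y : {V : Variety k // IrreducibleSpace V.toScheme ∧
    V.dim = (n : WithBot ℕ∞)} => BirEquiv X.1 Y.1)

/-- The type of stable birational isomorphism classes of irreducible varieties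
over `k` (the set `SB`). -/
def StableBirClass (k : Type u) [Field k] : Type (u + 1) :=
  Quot (fun X Y : {V : Variety k // IrreducibleSpace V.toScheme} =>
    StablyBirational X.1 Y.1)

/-- The family of varieties `C` together with the closed immersions `f i` realizes
exactly the `n`-dimensional irreducible components of `X`, each exactly once. -/
def RealizesComponents (n : ℕ) (X : Variety k) (m : ℕ)
    (C : Fin m → Variety k) (f : ∀ i, (C i).toScheme ⟶ X.toScheme) : Prop :=
  (∀ i, IsClosedImmersion (f i)) ∧ (∀ i, f i ≫ X.str = (C i).str) ∧
  Function.Injective (fun i => Set.range (f i).base) ∧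
  (Set.range fun i => Set.range (f i).base) =
    {S | S ∈ irreducibleComponents X.toScheme ∧
      topologicalKrullDim S = (n : WithBot ℕ∞)}

/-- `p : E ⟶ Z` is a Zariski-locally trivial `ℙ^ℓ`-bundle: every point of `Z` has an
open neighbourhood `W` such that `p⁻¹(W)` is isomorphic over `W` to `W × ℙ^ℓ`. -/
def IsProjBundle (ℓ : ℕ) {E Z : Variety k} (p : E.toScheme ⟶ Z.toScheme) : Prop :=
  ∀ z : Z.toScheme, ∃ W : Z.toScheme.Opens, z ∈ W ∧
    ∃ e : (p ⁻¹ᵁ W).toScheme ≅ Limits.pullback (W.ι ≫ Z.str) (ProjSpace.str k ℓ),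
      e.hom ≫ Limits.pullback.fst (W.ι ≫ Z.str) (ProjSpace.str k ℓ) = p ∣_ W

/-- `X` (of dimension `d`) has stable dimensional complexity `m`: `m` is the minimal
integer such that `X` is stably birational to `X' × 𝔸^(d-m)` for some variety `X'` of
dimension `m`. -/
def HasStableDimComplexity (X : Variety k) (d m : ℕ) : Prop :=
  (∃ X' A P : Variety k, X'.dim = (m : WithBot ℕ∞) ∧ IsAffSpace (d - m) A ∧
      IsProductOf P X' A ∧ StablyBirational X P) ∧
  ∀ j < m, ¬ ∃ X' A P : Variety k, X'.dim = (j : WithBot ℕ∞) ∧ IsAffSpace (d - j) A ∧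
      IsProductOf P X' A ∧ StablyBirational X P

/-- Generators of the covering relations among smooth varieties: `[X] = ∑ᵢ [Xᵢ]`
whenever `{Xᵢ → X}` is a finite family of locally closed embeddings of smooth
varieties with pairwise disjoint images whose union is all of `X`. -/
def smCutRel (k : Type u) [Field k] :
    Set (FreeAbelianGroup {V : Variety k // IsSmoothVar V}) :=
  {a | ∃ (X : {V : Variety k // IsSmoothVar V}) (m : ℕ)
        (P : Fin m → {V : Variety k // IsSmoothVar V})
        (f : ∀ i, (P i).1.toScheme ⟶ X.1.toScheme),
        (∀ i, IsImmersion (f i)) ∧ (∀ i, f i ≫ X.1.str = (P i).1.str) ∧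
        (∀ i j, i ≠ j → Disjoint (Set.range (f i).base) (Set.range (f j).base)) ∧
        (⋃ i, Set.range (f i).base) = Set.univ ∧
        a = FreeAbelianGroup.of X - ∑ i, FreeAbelianGroup.of (P i)}

/-- `K_0(V_k^{sm})`: the Grothendieck group of smooth varieties over `k`, with the
covering relations. -/
def K0sm (k : Type u) [Field k] : Type (u + 1) :=
  FreeAbelianGroup {V : Variety k // IsSmoothVar V} ⧸ AddSubgroup.closure (smCutRel k)

instance : AddCommGroup (K0sm k) := QuotientAddGroup.Quotient.addCommGroup _

/-- The class of a smooth variety in `K_0(V_k^{sm})`. -/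
def K0sm.cls (V : Variety k) (hV : IsSmoothVar V) : K0sm k :=
  QuotientAddGroup.mk (FreeAbelianGroup.of ⟨V, hV⟩)

end Variety
namespace Variety

variable {k : Type u} [Field k]

/-- The class of a variety in `K_0(V_k^{(n)})`. -/
def K0le.cls (n : ℕ) (V : Variety k) (hV : V.dim ≤ (n : WithBot ℕ∞)) : K0le k n :=
  K0.cls V hV

end Variety

open Variety

/-!
Attach to every variety `X` the cycle `∑ [closure {x}]`, over the points `x` of `X` whose closure
has dimension `n`, of birational classes. If `dim X ≤ n`, such points are generic points of
irreducible components, so the sum is finite. If `f : W ⟶ X` is an immersion over `k` and `W` is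
irreducible with generic point `η`, then `W` is an open subscheme of the reduced closed subscheme
on `closure {f η}`, hence birational to it and of the same dimension. The summand at a point
therefore does not change when `X` is replaced by an open or a closed subvariety containing the
point, so that the cycle is additive and descends to the Grothendieck group.

In the opposite direction, send the birational class of `W` to `[W]`. This is well defined because
proper closed subsets of an irreducible variety have smaller dimension, hence class zero. One
composite is visibly the identity; the other is the identity by Noetherian induction, cutting a
variety into an irreducible open subvariety and its complement.
-/

section Topology

variable {X : Type*} [TopologicalSpace X]

theorem topologicalKrullDim_add_one_le_of_ssubset {S T : Set X} (hS : IsClosed S)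
    (hT : IsIrreducible T) (hST : S ⊂ T) :
    topologicalKrullDim S + 1 ≤ topologicalKrullDim X := by
  rcases isEmpty_or_nonempty (TopologicalSpace.IrreducibleCloseds S) with hempty | hnonempty
  · simp only [topologicalKrullDim, Order.krullDim_eq_bot, WithBot.bot_add, bot_le]
  let inclusion := TopologicalSpace.IrreducibleCloseds.map ((↑) : S → X) continuous_subtype_val
  have inclusion_subset (c) : (inclusion c : Set X) ⊆ S :=
    closure_minimal (Subtype.coe_image_subset _ _) hS
  unfold topologicalKrullDim
  rw [← Order.krullDim_WithTop]
  refine Order.krullDim_le_of_strictMono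
    (fun c : WithTop _ => c.recTopCoe ⟨closure T, hT.closure, isClosed_closure⟩ inclusion) ?_
  intro a b hab
  cases b with
  | top =>
    lift a to TopologicalSpace.IrreducibleCloseds S using hab.ne
    exact ((inclusion_subset a).trans_ssubset hST).trans_subset subset_closure
  | coe b =>
    lift a to TopologicalSpace.IrreducibleCloseds S using (hab.trans (WithTop.coe_lt_top b)).ne
    exact TopologicalSpace.IrreducibleCloseds.map_strictMono_of_isInducing
      Topology.IsInducing.subtypeVal (WithTop.coe_lt_coe.1 hab)

theorem topologicalKrullDim_lt_of_ssubset {n : ℕ} (hX : topologicalKrullDim X ≤ n) {S T : Set X}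
    (hS : IsClosed S) (hT : IsIrreducible T) (hST : S ⊂ T) : topologicalKrullDim S < n := by
  contrapose! hX
  calc (n : WithBot ℕ∞) < n + 1 := by exact_mod_cast n.lt_succ_self
    _ ≤ topologicalKrullDim S + 1 := by gcongr
    _ ≤ topologicalKrullDim X := topologicalKrullDim_add_one_le_of_ssubset hS hT hST

theorem mem_irreducibleComponents_of_topologicalKrullDim_eq {n : ℕ}
    (hX : topologicalKrullDim X ≤ n) {S : Set X} (hS : IsClosed S) (hSirr : IsIrreducible S)
    (hSn : topologicalKrullDim S = n) : S ∈ irreducibleComponents X := by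
  refine ⟨hSirr, fun T hT hST => ?_⟩
  by_contra hTS
  exact (topologicalKrullDim_lt_of_ssubset hX hS hT ⟨hST, hTS⟩).ne hSn

theorem topologicalKrullDim_eq_bot_of_isEmpty [IsEmpty X] : topologicalKrullDim X = ⊥ :=
  have : IsEmpty (TopologicalSpace.IrreducibleCloseds X) :=
    ⟨fun S => S.2.nonempty.elim fun x _ => isEmptyElim x⟩
  Order.krullDim_eq_bot

theorem topologicalKrullDim_range {Y : Type*} [TopologicalSpace Y] {f : Y → X}
    (hf : Topology.IsEmbedding f) :
    topologicalKrullDim (Set.range f) = topologicalKrullDim Y :=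
  (hf.toHomeomorph.isHomeomorph.topologicalKrullDim_eq _).symm

theorem exists_opens_irreducibleSpace [TopologicalSpace.NoetherianSpace X] [Nonempty X] :
    ∃ U : TopologicalSpace.Opens X, IrreducibleSpace U := by
  obtain ⟨x⟩ := ‹Nonempty X›
  obtain ⟨U, hU, hne, hsub⟩ :=
    TopologicalSpace.NoetherianSpace.exists_isOpen_nonempty_subset_irreducibleComponent _
      (irreducibleComponent_mem_irreducibleComponents x)
  exact ⟨⟨U, hU⟩, Subtype.irreducibleSpace
    ⟨hne, isIrreducible_irreducibleComponent.isPreirreducible.open_subset hU hsub⟩⟩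

end Topology

section KrullDimension

theorem ringKrullDim_eq_of_isIntegral (R S : Type*) [CommRing R] [CommRing S] [Algebra R S]
    [Algebra.IsIntegral R S] [FaithfulSMul R S] : ringKrullDim S = ringKrullDim R := by
  apply le_antisymm
  · exact Order.krullDim_le_of_strictMono (PrimeSpectrum.comap (algebraMap R S)) fun p q hpq =>
      Ideal.IsIntegral.comap_lt_comap (I := p.asIdeal) (J := q.asIdeal) hpq
  · refine iSup_le fun l => ?_
    have hker : (⊥ : Ideal S).comap (algebraMap R S) ≤ l.head.asIdeal := by
      rw [← RingHom.ker_eq_comap_bot, (RingHom.injective_iff_ker_eq_bot _).1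
        (FaithfulSMul.algebraMap_injective R S)]
      exact bot_le
    obtain ⟨Q, -, hQ, hQl⟩ :=
      Ideal.exists_ideal_over_prime_of_isIntegral l.head.asIdeal (⊥ : Ideal S) hker
    have : Q.LiesOver l.head.asIdeal := ⟨hQl.symm⟩
    obtain ⟨L, hL, -⟩ := Ideal.exists_ltSeries_of_hasGoingUp l Q
    rw [← hL]
    exact le_iSup (fun l : LTSeries (PrimeSpectrum S) => (l.length : WithBot ℕ∞)) L

theorem ringKrullDim_eq_trdeg (k A : Type*) [Field k] [CommRing A] [IsDomain A] [Algebra k A]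
    [Algebra.FiniteType k A] : ringKrullDim A = (Algebra.trdeg k A).toNat := by
  obtain ⟨s, g, hg, hgint⟩ := exists_integral_inj_algHom_of_fg k A
  let : Algebra (MvPolynomial (Fin s) k) A := g.toRingHom.toAlgebra
  have : IsScalarTower k (MvPolynomial (Fin s) k) A :=
    IsScalarTower.of_algebraMap_eq fun x => (g.commutes x).symm
  have : Algebra.IsIntegral (MvPolynomial (Fin s) k) A := ⟨hgint⟩
  have : FaithfulSMul (MvPolynomial (Fin s) k) A := (faithfulSMul_iff_algebraMap_injective _ _).2 hg
  have htrdeg := lift_trdeg_add_eq k (MvPolynomial (Fin s) k) A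
  rw [trdeg_eq_zero (R := MvPolynomial (Fin s) k), Cardinal.lift_zero, add_zero] at htrdeg
  rw [ringKrullDim_eq_of_isIntegral (MvPolynomial (Fin s) k) A,
    MvPolynomial.ringKrullDim_of_isNoetherianRing, ← Cardinal.toNat_lift, ← htrdeg]
  simp [MvPolynomial.trdeg_of_isDomain]

theorem ringKrullDim_eq_of_isAlgebraic (k A B : Type*) [Field k] [CommRing A] [IsDomain A]
    [CommRing B] [IsDomain B] [Algebra k A] [Algebra.FiniteType k A] [Algebra k B]
    [Algebra.FiniteType k B] [Algebra A B] [IsScalarTower k A B] [FaithfulSMul A B]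
    [Algebra.IsAlgebraic A B] : ringKrullDim B = ringKrullDim A := by
  have htrdeg := lift_trdeg_add_eq k A B
  rw [trdeg_eq_zero (R := A), Cardinal.lift_zero, add_zero] at htrdeg
  rw [ringKrullDim_eq_trdeg k A, ringKrullDim_eq_trdeg k B, ← Cardinal.toNat_lift, ← htrdeg,
    Cardinal.toNat_lift]

theorem ringKrullDim_localizationAway (k : Type*) {A : Type*} [Field k] [CommRing A] [IsDomain A]
    [Algebra k A] [Algebra.FiniteType k A] {f : A} (hf : f ≠ 0) :
    ringKrullDim (Localization.Away f) = ringKrullDim A := by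
  have hle : Submonoid.powers f ≤ nonZeroDivisors A :=
    powers_le_nonZeroDivisors_of_noZeroDivisors hf
  have : IsDomain (Localization.Away f) := IsLocalization.isDomain_localization hle
  have : FaithfulSMul A (Localization.Away f) :=
    (faithfulSMul_iff_algebraMap_injective _ _).2 (IsLocalization.injective _ hle)
  have : Algebra.IsAlgebraic A (Localization.Away f) :=
    IsLocalization.isAlgebraic _ (Submonoid.powers f)
  exact ringKrullDim_eq_of_isAlgebraic k A (Localization.Away f)

theorem topologicalKrullDim_eq_ringKrullDim_of_isOpen (k : Type*) {A : Type*} [Field k] [CommRing A]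
    [IsDomain A] [Algebra k A] [Algebra.FiniteType k A]
    {V : Set (PrimeSpectrum A)} (hV : IsOpen V) (hne : V.Nonempty) :
    topologicalKrullDim V = ringKrullDim A := by
  rw [← PrimeSpectrum.topologicalKrullDim_eq_ringKrullDim]
  refine (topologicalKrullDim_subspace_le _ _).antisymm ?_
  obtain ⟨p, hp⟩ := hne
  obtain ⟨_, ⟨f, rfl⟩, hpf, hfV⟩ :=
    PrimeSpectrum.isTopologicalBasis_basic_opens.exists_subset_of_mem_open hp hV
  have hf : f ≠ 0 := by
    rintro rfl
    exact hpf p.asIdeal.zero_mem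
  have hrange := PrimeSpectrum.localization_away_comap_range (Localization.Away f) f
  have hembedding :=
    (PrimeSpectrum.localization_away_isOpenEmbedding (Localization.Away f) f).isEmbedding
  calc topologicalKrullDim (PrimeSpectrum A)
      = topologicalKrullDim (PrimeSpectrum (Localization.Away f)) := by
        simp only [PrimeSpectrum.topologicalKrullDim_eq_ringKrullDim,
          ringKrullDim_localizationAway k hf]
    _ = topologicalKrullDim (PrimeSpectrum.basicOpen f : Set (PrimeSpectrum A)) := by
        rw [← topologicalKrullDim_range hembedding, hrange]
    _ ≤ topologicalKrullDim V :=
      (Topology.IsEmbedding.inclusion hfV).isInducing.topologicalKrullDim_le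

end KrullDimension

section Schemes

theorem topologicalKrullDim_eq_iSup_coheight (X : Scheme.{u}) :
    topologicalKrullDim X = ⨆ x : X, (Order.coheight x : WithBot ℕ∞) :=
  (Order.krullDim_eq_of_orderIso irreducibleSetEquivPoints).trans Order.krullDim_eq_iSup_coheight

theorem coheight_le_topologicalKrullDim {X : Scheme.{u}} (x : X) :
    (Order.coheight x : WithBot ℕ∞) ≤ topologicalKrullDim X := by
  rw [topologicalKrullDim_eq_iSup_coheight]
  exact le_iSup (fun x : X => (Order.coheight x : WithBot ℕ∞)) x

theorem topologicalKrullDim_eq_of_isOpenImmersion {k : Type u} [Field k] {U W : Scheme.{u}}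
    [IsIntegral W] [Nonempty U] (str : W ⟶ Spec (CommRingCat.of k)) [LocallyOfFiniteType str]
    (j : U ⟶ W) [IsOpenImmersion j] : topologicalKrullDim U = topologicalKrullDim W := by
  refine j.isOpenEmbedding.isInducing.topologicalKrullDim_le.antisymm ?_
  rw [topologicalKrullDim_eq_iSup_coheight W]
  refine iSup_le fun x => ?_
  obtain ⟨A, g, hg, ⟨y, rfl⟩, -⟩ :=
    Scheme.exists_affine_mem_range_and_range_subset (U := ⊤) (TopologicalSpace.Opens.mem_top x)
  have : Nonempty (Spec A) := ⟨y⟩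
  have : IsDomain A := (affine_isIntegral_iff A).1 (isIntegral_of_isOpenImmersion g)
  obtain ⟨φ, hφ⟩ := Spec.map_surjective (g ≫ str)
  have hφft : φ.hom.FiniteType :=
    (HasRingHomProperty.Spec_iff (P := @LocallyOfFiniteType)).1 (hφ ▸ inferInstance)
  let : Algebra k A := φ.hom.toAlgebra
  have : Algebra.FiniteType k A := hφft
  have hne : (g ⁻¹' Set.range j).Nonempty := by
    obtain ⟨_, ⟨z, rfl⟩, hz⟩ := nonempty_preirreducible_inter g.isOpenEmbedding.isOpen_range
      j.isOpenEmbedding.isOpen_range (Set.range_nonempty _) (Set.range_nonempty _)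
    exact ⟨z, hz⟩
  have hopen : IsOpen (g ⁻¹' Set.range j) :=
    j.isOpenEmbedding.isOpen_range.preimage g.continuous
  have hinducing : Topology.IsInducing (Set.restrictPreimage (Set.range j) g) :=
    g.isOpenEmbedding.isInducing.restrictPreimage _
  calc (Order.coheight (g y) : WithBot ℕ∞)
      = Order.coheight y := by rw [coheight_eq_of_isOpenImmersion g]
    _ ≤ topologicalKrullDim (Spec A) := coheight_le_topologicalKrullDim y
    _ = topologicalKrullDim (g ⁻¹' Set.range j) :=
        (PrimeSpectrum.topologicalKrullDim_eq_ringKrullDim A).trans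
          (topologicalKrullDim_eq_ringKrullDim_of_isOpen k hopen hne).symm
    _ ≤ topologicalKrullDim (Set.range j) := hinducing.topologicalKrullDim_le
    _ = topologicalKrullDim U := topologicalKrullDim_range j.isOpenEmbedding.isEmbedding

theorem isReduced_subscheme_vanishingIdeal {X : Scheme.{u}} (Z : TopologicalSpace.Closeds X) :
    IsReduced (Scheme.IdealSheafData.vanishingIdeal Z).subscheme := by
  let I := Scheme.IdealSheafData.vanishingIdeal Z
  have (U : I.subschemeCover.openCover.I₀) : IsReduced (I.subschemeCover.openCover.X U) := by
    change X.affineOpens at U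
    have : _root_.IsReduced (Γ(X, U.1) ⧸ I.ideal U) :=
      (Ideal.isRadical_iff_quotient_reduced _).1 (PrimeSpectrum.isRadical_vanishingIdeal _)
    exact inferInstanceAs (IsReduced (Spec (CommRingCat.of (Γ(X, U.1) ⧸ I.ideal U))))
  exact IsReduced.of_openCover _ I.subschemeCover.openCover

theorem range_subschemeι_vanishingIdeal {X : Scheme.{u}} (Z : TopologicalSpace.Closeds X) :
    Set.range (Scheme.IdealSheafData.vanishingIdeal Z).subschemeι = Z := by
  rw [Scheme.IdealSheafData.range_subschemeι, Scheme.IdealSheafData.coe_support_vanishingIdeal]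

theorem ker_eq_vanishingIdeal_closure_range {W X : Scheme.{u}} [IsReduced W] (f : W ⟶ X) :
    f.ker =
      Scheme.IdealSheafData.vanishingIdeal (TopologicalSpace.Closeds.closure (Set.range f)) := by
  rw [← Set.image_univ, ← TopologicalSpace.Closeds.coe_top,
    ← Scheme.IdealSheafData.map_vanishingIdeal, Scheme.IdealSheafData.vanishingIdeal_top,
    Scheme.nilradical_eq_bot, Scheme.IdealSheafData.map_bot]

theorem exists_isOpenImmersion_subscheme_vanishingIdeal {W X : Scheme.{u}} [IsReduced W]
    (f : W ⟶ X) [IsImmersion f] [QuasiCompact f] {Z : TopologicalSpace.Closeds X}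
    (hZ : closure (Set.range f) = Z) :
    ∃ g : W ⟶ (Scheme.IdealSheafData.vanishingIdeal Z).subscheme,
      IsOpenImmersion g ∧ g ≫ (Scheme.IdealSheafData.vanishingIdeal Z).subschemeι = f := by
  obtain rfl : TopologicalSpace.Closeds.closure (Set.range f) = Z := TopologicalSpace.Closeds.ext hZ
  rw [← ker_eq_vanishingIdeal_closure_range]
  exact ⟨f.toImage, inferInstance, f.toImage_imageι⟩

end Schemes

namespace Variety

variable {k : Type u} [Field k]

section Subvarieties

attribute [instance] reduced separated locallyOfFiniteType quasiCompact

instance (X : Variety k) : IsNoetherian X.toScheme :=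
  have : CompactSpace X.toScheme :=
    ⟨QuasiCompact.isCompact_preimage (f := X.str) Set.univ isOpen_univ isCompact_univ⟩
  have : IsLocallyNoetherian X.toScheme := LocallyOfFiniteType.isLocallyNoetherian X.str
  {}

/-- The open subvariety of `X` on the open set `U`. -/
def openSubvariety (X : Variety k) (U : X.toScheme.Opens) : Variety k where
  toScheme := U
  str := U.ι ≫ X.str
  reduced := inferInstance
  separated := inferInstance
  locallyOfFiniteType := inferInstance
  quasiCompact :=
    have : TopologicalSpace.NoetherianSpace U := U.ι.isOpenEmbedding.isInducing.noetherianSpace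
    inferInstance

/-- The inclusion of an open subvariety. -/
def openι (X : Variety k) (U : X.toScheme.Opens) :
    (X.openSubvariety U).toScheme ⟶ X.toScheme := U.ι

instance (X : Variety k) (U : X.toScheme.Opens) : IsOpenImmersion (X.openι U) :=
  inferInstanceAs (IsOpenImmersion U.ι)

/-- The closed subvariety of `X` on the closed set `Z`, with its reduced structure. -/
def closedSubvariety (X : Variety k) (Z : TopologicalSpace.Closeds X.toScheme) : Variety k where
  toScheme := (Scheme.IdealSheafData.vanishingIdeal Z).subscheme
  str := (Scheme.IdealSheafData.vanishingIdeal Z).subschemeι ≫ X.str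
  reduced := isReduced_subscheme_vanishingIdeal Z
  separated := inferInstance
  locallyOfFiniteType := inferInstance
  quasiCompact := inferInstance

/-- The inclusion of a closed subvariety. -/
def closedι (X : Variety k) (Z : TopologicalSpace.Closeds X.toScheme) :
    (X.closedSubvariety Z).toScheme ⟶ X.toScheme :=
  (Scheme.IdealSheafData.vanishingIdeal Z).subschemeι

instance (X : Variety k) (Z : TopologicalSpace.Closeds X.toScheme) :
    IsClosedImmersion (X.closedι Z) :=
  inferInstanceAs (IsClosedImmersion (Scheme.IdealSheafData.vanishingIdeal Z).subschemeι)

theorem range_closedι (X : Variety k) (Z : TopologicalSpace.Closeds X.toScheme) :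
    Set.range (X.closedι Z) = Z :=
  range_subschemeι_vanishingIdeal Z

theorem range_openι_eq_compl_range_closedι (X : Variety k) (U : X.toScheme.Opens) :
    Set.range (X.openι U) = (Set.range (X.closedι U.compl))ᶜ := by
  rw [range_closedι, TopologicalSpace.Opens.coe_compl, compl_compl]
  exact U.range_ι

theorem dim_closedSubvariety (X : Variety k) (Z : TopologicalSpace.Closeds X.toScheme) :
    (X.closedSubvariety Z).dim = topologicalKrullDim Z := by
  rw [dim, ← topologicalKrullDim_range (X.closedι Z).isClosedEmbedding.isEmbedding, range_closedι]
  rfl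

theorem dim_closedSubvariety_le (X : Variety k) (Z : TopologicalSpace.Closeds X.toScheme) :
    (X.closedSubvariety Z).dim ≤ X.dim :=
  (X.closedι Z).isClosedEmbedding.isInducing.topologicalKrullDim_le

theorem dim_openSubvariety_le (X : Variety k) (U : X.toScheme.Opens) :
    (X.openSubvariety U).dim ≤ X.dim :=
  (X.openι U).isOpenEmbedding.isInducing.topologicalKrullDim_le

theorem dim_lt_of_isEmpty (X : Variety k) [IsEmpty X.toScheme] (n : ℕ) : X.dim < n := by
  rw [dim, topologicalKrullDim_eq_bot_of_isEmpty]
  exact WithBot.bot_lt_coe _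

theorem isIntegral_of_irreducibleSpace (X : Variety k) [IrreducibleSpace X.toScheme] :
    IsIntegral X.toScheme :=
  isIntegral_of_irreducibleSpace_of_isReduced X.toScheme

theorem dim_eq_of_isOpenImmersion {U W : Variety k} [Nonempty U.toScheme]
    [IrreducibleSpace W.toScheme] (j : U.toScheme ⟶ W.toScheme) [IsOpenImmersion j] :
    U.dim = W.dim :=
  have := W.isIntegral_of_irreducibleSpace
  topologicalKrullDim_eq_of_isOpenImmersion W.str j

/-- The integral closed subvariety of `X` with generic point `x`. -/
def pointClosure (X : Variety k) (x : X.toScheme) : Variety k :=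
  X.closedSubvariety (TopologicalSpace.Closeds.closure {x})

/-- The inclusion of the closure of a point. -/
def pointClosureι (X : Variety k) (x : X.toScheme) :
    (X.pointClosure x).toScheme ⟶ X.toScheme :=
  X.closedι (TopologicalSpace.Closeds.closure {x})

instance (X : Variety k) (x : X.toScheme) : IsClosedImmersion (X.pointClosureι x) :=
  inferInstanceAs (IsClosedImmersion (X.closedι _))

theorem range_pointClosureι (X : Variety k) (x : X.toScheme) :
    Set.range (X.pointClosureι x) = closure {x} :=
  X.range_closedι _

instance (X : Variety k) (x : X.toScheme) : IrreducibleSpace (X.pointClosure x).toScheme := by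
  let e := (X.pointClosureι x).isClosedEmbedding.isEmbedding.toHomeomorph
  have : IrreducibleSpace (Set.range (X.pointClosureι x)) :=
    Subtype.irreducibleSpace (X.range_pointClosureι x ▸ isIrreducible_singleton.closure)
  rw [irreducibleSpace_def, Set.top_eq_univ, ← Set.image_univ_of_surjective e.symm.surjective]
  exact (IrreducibleSpace.isIrreducible_univ _).image _ e.symm.continuous.continuousOn

theorem pointClosureι_genericPoint (X : Variety k) (x : X.toScheme) :
    X.pointClosureι x (genericPoint (X.pointClosure x).toScheme) = x := by
  have hgeneric := (genericPoint_spec (X.pointClosure x).toScheme).image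
    (X.pointClosureι x).continuous
  rw [Set.image_univ, range_pointClosureι, closure_closure] at hgeneric
  exact hgeneric.eq rfl

theorem dim_pointClosure (X : Variety k) (x : X.toScheme) :
    (X.pointClosure x).dim = topologicalKrullDim (closure {x}) :=
  X.dim_closedSubvariety _

end Subvarieties

section BirationalClasses

theorem birEquiv_of_isOpenImmersion {U W : Variety k} [Nonempty U.toScheme]
    [IrreducibleSpace W.toScheme] (j : U.toScheme ⟶ W.toScheme) [IsOpenImmersion j]
    (hj : j ≫ W.str = U.str) : BirEquiv U W := by
  refine ⟨⊤, j.opensRange, dense_univ,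
    j.opensRange.isOpen.dense (Set.range_nonempty j), U.toScheme.topIso ≪≫ j.isoOpensRange, ?_⟩
  simp [hj]

/-- The birational class of an irreducible variety of dimension `n`. -/
def BirClass.mk {n : ℕ} (W : Variety k) (hW : IrreducibleSpace W.toScheme ∧ W.dim = n) :
    BirClass k n :=
  Quot.mk _ ⟨W, hW⟩

theorem BirClass.exists_mk_eq {n : ℕ} (b : BirClass k n) : ∃ W hW, BirClass.mk W hW = b :=
  let ⟨⟨W, hW⟩, hb⟩ := Quot.exists_rep b
  ⟨W, hW, hb⟩

open Classical in
/-- The basis element of the birational class of `W`, understood to be `0` unless `W` is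
irreducible of dimension `n`. -/
def birSingle (n : ℕ) (W : Variety k) : BirClass k n →₀ ℤ :=
  if hW : IrreducibleSpace W.toScheme ∧ W.dim = n then Finsupp.single (BirClass.mk W hW) 1 else 0

theorem birSingle_of_irreducibleSpace {n : ℕ} {W : Variety k}
    (hW : IrreducibleSpace W.toScheme ∧ W.dim = n) :
    birSingle n W = Finsupp.single (BirClass.mk W hW) 1 :=
  dif_pos hW

theorem birSingle_of_dim_ne {n : ℕ} {W : Variety k} (h : W.dim ≠ n) : birSingle n W = 0 :=
  dif_neg fun hW => h hW.2

theorem birSingle_eq_of_isOpenImmersion (n : ℕ) {U W : Variety k} [IrreducibleSpace U.toScheme]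
    [IrreducibleSpace W.toScheme] (j : U.toScheme ⟶ W.toScheme) [IsOpenImmersion j]
    (hj : j ≫ W.str = U.str) : birSingle n U = birSingle n W := by
  have hdim : U.dim = W.dim := dim_eq_of_isOpenImmersion j
  by_cases hW : W.dim = n
  · rw [birSingle_of_irreducibleSpace ⟨‹_›, hdim.trans hW⟩, birSingle_of_irreducibleSpace ⟨‹_›, hW⟩]
    exact congrArg (Finsupp.single · 1) (Quot.sound (birEquiv_of_isOpenImmersion j hj))
  · rw [birSingle_of_dim_ne hW, birSingle_of_dim_ne (hdim.trans_ne hW)]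

theorem exists_isOpenImmersion_pointClosure {W X : Variety k} [IrreducibleSpace W.toScheme]
    (f : W.toScheme ⟶ X.toScheme) [IsImmersion f] :
    ∃ g : W.toScheme ⟶ (X.pointClosure (f (genericPoint W.toScheme))).toScheme,
      IsOpenImmersion g ∧ g ≫ X.pointClosureι (f (genericPoint W.toScheme)) = f := by
  have hgeneric := (genericPoint_spec W.toScheme).image f.continuous
  rw [Set.image_univ] at hgeneric
  exact exists_isOpenImmersion_subscheme_vanishingIdeal f hgeneric.def.symm

theorem birSingle_pointClosure_genericPoint (n : ℕ) {W X : Variety k}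
    [IrreducibleSpace W.toScheme] (f : W.toScheme ⟶ X.toScheme) [IsImmersion f]
    (hf : f ≫ X.str = W.str) :
    birSingle n (X.pointClosure (f (genericPoint W.toScheme))) = birSingle n W := by
  obtain ⟨g, hg, hgf⟩ := exists_isOpenImmersion_pointClosure f
  refine (birSingle_eq_of_isOpenImmersion n g ?_).symm
  rw [← hf]
  exact (Category.assoc _ _ _).symm.trans (congrArg (· ≫ X.str) hgf)

theorem birSingle_pointClosure_apply (n : ℕ) {Y X : Variety k} (f : Y.toScheme ⟶ X.toScheme)
    [IsImmersion f] (hf : f ≫ X.str = Y.str) (y : Y.toScheme) :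
    birSingle n (X.pointClosure (f y)) = birSingle n (Y.pointClosure y) := by
  have h := birSingle_pointClosure_genericPoint n (Y.pointClosureι y ≫ f)
    (by rw [Category.assoc, hf]; rfl)
  rwa [Scheme.Hom.comp_apply, pointClosureι_genericPoint] at h

end BirationalClasses

section Cycles

/-- The cycle of the `n`-dimensional components of `X`, with components recorded by their
birational classes. It is encoded as a sum over all points `x` of `X`, in which `x` contributes
the class of its closure: this makes it additive, and for `X` of dimension at most `n` only the
generic points of the `n`-dimensional components contribute. -/
def birCycle (n : ℕ) (X : Variety k) : BirClass k n →₀ ℤ :=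
  ∑ᶠ x, birSingle n (X.pointClosure x)

theorem dim_closure_of_birSingle_ne_zero {n : ℕ} {X : Variety k} {x : X.toScheme}
    (hx : birSingle n (X.pointClosure x) ≠ 0) : topologicalKrullDim (closure {x}) = n := by
  rw [← dim_pointClosure]
  exact not_imp_comm.1 birSingle_of_dim_ne hx

theorem mem_genericPoints_of_birSingle_ne_zero {n : ℕ} {X : Variety k} (hX : X.dim ≤ n)
    {x : X.toScheme} (hx : birSingle n (X.pointClosure x) ≠ 0) : x ∈ genericPoints X.toScheme :=
  mem_irreducibleComponents_of_topologicalKrullDim_eq hX isClosed_closure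
    isIrreducible_singleton.closure (dim_closure_of_birSingle_ne_zero hx)

theorem finite_support_birSingle_pointClosure {n : ℕ} {X : Variety k} (hX : X.dim ≤ n) :
    (Function.support fun x => birSingle n (X.pointClosure x)).Finite :=
  (genericPoints.finite TopologicalSpace.NoetherianSpace.finite_irreducibleComponents).subset
    fun _ => mem_genericPoints_of_birSingle_ne_zero hX

theorem finsum_mem_range_birSingle_pointClosure (n : ℕ) {Y X : Variety k}
    (f : Y.toScheme ⟶ X.toScheme) [IsImmersion f] (hf : f ≫ X.str = Y.str) :
    ∑ᶠ x ∈ Set.range f, birSingle n (X.pointClosure x) = birCycle n Y := by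
  rw [finsum_mem_range f.isEmbedding.injective]
  exact finsum_congr (birSingle_pointClosure_apply n f hf)

theorem birCycle_eq_of_iso (n : ℕ) {X Y : Variety k} (e : X.toScheme ≅ Y.toScheme)
    (he : e.hom ≫ Y.str = X.str) : birCycle n X = birCycle n Y := by
  rw [← finsum_mem_range_birSingle_pointClosure n e.hom he,
    e.hom.surjective.range_eq, finsum_mem_univ, birCycle]

theorem birCycle_eq_add {n : ℕ} {X Y U : Variety k} (hX : X.dim ≤ n)
    (i : Y.toScheme ⟶ X.toScheme) (j : U.toScheme ⟶ X.toScheme) [IsClosedImmersion i]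
    [IsOpenImmersion j] (hi : i ≫ X.str = Y.str) (hj : j ≫ X.str = U.str)
    (hij : Set.range j = (Set.range i)ᶜ) : birCycle n X = birCycle n Y + birCycle n U := by
  have hfinite := finite_support_birSingle_pointClosure hX
  rw [← finsum_mem_range_birSingle_pointClosure n i hi,
    ← finsum_mem_range_birSingle_pointClosure n j hj, hij,
    ← finsum_mem_union' disjoint_compl_right (hfinite.subset Set.inter_subset_right)
      (hfinite.subset Set.inter_subset_right),
    Set.union_compl_self, finsum_mem_univ, birCycle]

theorem birCycle_of_dim_lt {n : ℕ} {X : Variety k} (hX : X.dim < n) : birCycle n X = 0 :=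
  finsum_eq_zero_of_forall_eq_zero fun _ =>
    birSingle_of_dim_ne ((X.dim_closedSubvariety_le _).trans_lt hX).ne

theorem birCycle_of_irreducibleSpace {n : ℕ} {X : Variety k} [IrreducibleSpace X.toScheme]
    (hX : X.dim ≤ n) : birCycle n X = birSingle n X := by
  rw [birCycle, finsum_eq_single _ (genericPoint X.toScheme)]
  · simpa using birSingle_pointClosure_genericPoint n (𝟙 X.toScheme) (Category.id_comp X.str)
  · intro x hx
    contrapose! hx
    simpa [genericPoints_eq_singleton] using mem_genericPoints_of_birSingle_ne_zero hX hx

theorem RealizesComponents.isGenericPoint {n m : ℕ} {X : Variety k} {C : Fin m → Variety k}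
    {f : ∀ i, (C i).toScheme ⟶ X.toScheme} (hf : RealizesComponents n X m C f) (i : Fin m)
    [IrreducibleSpace (C i).toScheme] :
    IsGenericPoint (f i (genericPoint (C i).toScheme)) (Set.range (f i)) := by
  have := hf.1 i
  have hgeneric := (genericPoint_spec (C i).toScheme).image (f i).continuous
  rwa [Set.image_univ, (f i).isClosedEmbedding.isClosed_range.closure_eq] at hgeneric

theorem RealizesComponents.exists_eq_of_birSingle_ne_zero {n m : ℕ} {X : Variety k}
    (hX : X.dim ≤ n) {C : Fin m → Variety k} {f : ∀ i, (C i).toScheme ⟶ X.toScheme}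
    (hf : RealizesComponents n X m C f) [∀ i, IrreducibleSpace (C i).toScheme] {x : X.toScheme}
    (hx : birSingle n (X.pointClosure x) ≠ 0) :
    ∃ i, f i (genericPoint (C i).toScheme) = x := by
  obtain ⟨i, hi⟩ : closure {x} ∈ Set.range fun i => Set.range (f i) :=
    hf.2.2.2 ▸ ⟨mem_genericPoints_of_birSingle_ne_zero hX hx, dim_closure_of_birSingle_ne_zero hx⟩
  exact ⟨i, (hf.isGenericPoint i).eq hi.symm⟩

theorem RealizesComponents.birCycle_eq_sum {n m : ℕ} {X : Variety k} (hX : X.dim ≤ n)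
    {C : Fin m → Variety k} {f : ∀ i, (C i).toScheme ⟶ X.toScheme}
    (hf : RealizesComponents n X m C f) [∀ i, IrreducibleSpace (C i).toScheme] :
    birCycle n X = ∑ i, birSingle n (C i) := by
  let η (i : Fin m) : X.toScheme := f i (genericPoint (C i).toScheme)
  have hη : Function.Injective η := fun i j hij =>
    hf.2.2.1 <| (hf.isGenericPoint i).def.symm.trans <|
      (congrArg (closure {·}) hij).trans (hf.isGenericPoint j).def
  have hsupport : (Function.support fun x => birSingle n (X.pointClosure x)) ⊆ Set.range η :=
    fun _ => hf.exists_eq_of_birSingle_ne_zero hX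
  calc birCycle n X = ∑ᶠ x ∈ Set.range η, birSingle n (X.pointClosure x) := by
        rw [birCycle, ← finsum_mem_univ, ← finsum_mem_inter_support, Set.univ_inter,
          ← finsum_mem_inter_support (s := Set.range η), Set.inter_eq_right.2 hsupport]
    _ = ∑ i, birSingle n (X.pointClosure (η i)) := by
        rw [finsum_mem_range hη, finsum_eq_sum_of_fintype]
    _ = ∑ i, birSingle n (C i) := Finset.sum_congr rfl fun i _ =>
        have := hf.1 i
        birSingle_pointClosure_genericPoint n (f i) (hf.2.1 i)

end Cycles

section NoetherianInduction

theorem range_closedι_comp_ssubset {X Y : Variety k} (i : Y.toScheme ⟶ X.toScheme)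
    [IsClosedImmersion i] (U : Y.toScheme.Opens) [Nonempty (Y.openSubvariety U).toScheme] :
    Set.range (Y.closedι U.compl ≫ i) ⊂ Set.range i := by
  obtain ⟨y, hy⟩ := Set.range_nonempty (Y.openι U)
  rw [range_openι_eq_compl_range_closedι] at hy
  rw [Set.ssubset_iff_exists]
  refine ⟨?_, i y, Set.mem_range_self y, ?_⟩
  · rintro _ ⟨z, rfl⟩
    exact ⟨Y.closedι U.compl z, (Scheme.Hom.comp_apply _ _ _).symm⟩
  · rintro ⟨z, hz⟩
    rw [Scheme.Hom.comp_apply] at hz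
    exact hy ⟨z, i.isClosedEmbedding.injective hz⟩

theorem induction_on_openSubvariety {P : Variety k → Prop}
    (hempty : ∀ X : Variety k, IsEmpty X.toScheme → P X)
    (hirreducible : ∀ X : Variety k, IrreducibleSpace X.toScheme → P X)
    (hcut : ∀ (X : Variety k) (U : X.toScheme.Opens),
      P (X.closedSubvariety U.compl) → P (X.openSubvariety U) → P X)
    (X : Variety k) : P X := by
  suffices ∀ (Z : TopologicalSpace.Closeds X.toScheme) (Y : Variety k)
      (i : Y.toScheme ⟶ X.toScheme), IsClosedImmersion i → Set.range i = Z → P Y from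
    this ⊤ X (𝟙 _) inferInstance (by simp)
  intro Z
  induction Z using WellFoundedLT.induction with
  | ind Z ih =>
  intro Y i hi hZ
  rcases isEmpty_or_nonempty Y.toScheme with hY | hY
  · exact hempty Y hY
  obtain ⟨U, hU⟩ : ∃ U : Y.toScheme.Opens, IrreducibleSpace (Y.openSubvariety U).toScheme :=
    exists_opens_irreducibleSpace
  refine hcut Y U ?_ (hirreducible _ hU)
  refine ih ⟨_, (Y.closedι U.compl ≫ i).isClosedEmbedding.isClosed_range⟩ ?_ _ _ inferInstance rfl
  exact (range_closedι_comp_ssubset i U).trans_eq hZ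

end NoetherianInduction

section GrothendieckGroup

theorem K0graded.cls_eq_zero {n : ℕ} {X : Variety k} (hX : X.dim < n) :
    K0graded.cls n X hX.le = 0 :=
  (QuotientAddGroup.eq_zero_iff _).2 (AddSubgroup.subset_closure (Or.inr ⟨⟨X, hX.le⟩, hX, rfl⟩))

theorem K0graded.cls_eq_of_iso {n : ℕ} {X Y : Variety k} (hX : X.dim ≤ n) (hY : Y.dim ≤ n)
    (e : X.toScheme ≅ Y.toScheme) (he : e.hom ≫ Y.str = X.str) :
    K0graded.cls n X hX = K0graded.cls n Y hY := by
  rw [← sub_eq_zero]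
  exact (QuotientAddGroup.eq_zero_iff (FreeAbelianGroup.of _ - FreeAbelianGroup.of _)).2
    (AddSubgroup.subset_closure (Or.inl (Or.inl ⟨⟨X, hX⟩, ⟨Y, hY⟩, ⟨e, he⟩, rfl⟩)))

theorem K0graded.cls_eq_add {n : ℕ} {X : Variety k} (hX : X.dim ≤ n) (U : X.toScheme.Opens) :
    K0graded.cls n X hX =
      K0graded.cls n (X.closedSubvariety U.compl) ((X.dim_closedSubvariety_le _).trans hX) +
      K0graded.cls n (X.openSubvariety U) ((X.dim_openSubvariety_le U).trans hX) := by
  rw [← sub_eq_zero, ← sub_sub]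
  refine (QuotientAddGroup.eq_zero_iff
    (FreeAbelianGroup.of _ - FreeAbelianGroup.of _ - FreeAbelianGroup.of _)).2
    (AddSubgroup.subset_closure (Or.inl (Or.inr ?_)))
  exact ⟨⟨X, hX⟩, ⟨X.closedSubvariety U.compl, _⟩, ⟨X.openSubvariety U, _⟩, X.closedι U.compl,
    X.openι U, inferInstance, inferInstance, rfl, rfl, X.range_openι_eq_compl_range_closedι U, rfl⟩

theorem K0graded.cls_openSubvariety {n : ℕ} {X : Variety k} [IrreducibleSpace X.toScheme]
    (hX : X.dim ≤ n) {U : X.toScheme.Opens} (hU : (U : Set X.toScheme).Nonempty) :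
    K0graded.cls n (X.openSubvariety U) ((X.dim_openSubvariety_le U).trans hX) =
      K0graded.cls n X hX := by
  have hdim : (X.closedSubvariety U.compl).dim < n := by
    rw [dim_closedSubvariety]
    refine topologicalKrullDim_lt_of_ssubset hX U.compl.isClosed
      (IrreducibleSpace.isIrreducible_univ _) (Set.ssubset_univ_iff.2 ?_)
    rwa [TopologicalSpace.Opens.coe_compl, Set.compl_ne_univ]
  rw [K0graded.cls_eq_add hX U, K0graded.cls_eq_zero hdim, zero_add]

theorem K0graded.cls_eq_of_birEquiv {n : ℕ} {X Y : Variety k} [IrreducibleSpace X.toScheme]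
    [IrreducibleSpace Y.toScheme] (hX : X.dim ≤ n) (hY : Y.dim ≤ n) (hXY : BirEquiv X Y) :
    K0graded.cls n X hX = K0graded.cls n Y hY := by
  obtain ⟨U, V, hU, hV, e, he⟩ := hXY
  rw [← K0graded.cls_openSubvariety hX hU.nonempty, ← K0graded.cls_openSubvariety hY hV.nonempty]
  exact K0graded.cls_eq_of_iso _ _ e he

theorem K0graded.addHom_ext {n : ℕ} {A : Type*} [AddCommGroup A] {φ ψ : K0graded k n →+ A}
    (h : ∀ (X : Variety k) (hX : X.dim ≤ n),
      φ (K0graded.cls n X hX) = ψ (K0graded.cls n X hX)) : φ = ψ :=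
  QuotientAddGroup.addMonoidHom_ext _ <| FreeAbelianGroup.lift_ext _ _ fun X => h X.1 X.2

/-- The homomorphism on `K_0(V_k^{(n,n-1)})` induced by `birCycle`. -/
def birCycleHom (k : Type u) [Field k] (n : ℕ) : K0graded k n →+ (BirClass k n →₀ ℤ) :=
  QuotientAddGroup.lift _ (FreeAbelianGroup.lift fun X => birCycle n X.1) <| by
    rw [AddSubgroup.closure_le]
    rintro _ ((⟨X, Y, ⟨e, he⟩, rfl⟩ | ⟨X, Y, U, i, j, _, _, hi, hj, hij, rfl⟩) | ⟨X, hX, rfl⟩)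
    · simp [birCycle_eq_of_iso n e he]
    · simp [birCycle_eq_add X.2 i j hi hj hij]
    · simp [birCycle_of_dim_lt hX]

theorem birCycleHom_cls {n : ℕ} {X : Variety k} (hX : X.dim ≤ n) :
    birCycleHom k n (K0graded.cls n X hX) = birCycle n X :=
  FreeAbelianGroup.lift_apply_of _ _

/-- The class in `K_0(V_k^{(n,n-1)})` of any variety representing a given birational class,
extended linearly. -/
def birClassHom (k : Type u) [Field k] (n : ℕ) : (BirClass k n →₀ ℤ) →+ K0graded k n :=
  Finsupp.liftAddHom fun b => zmultiplesHom _ <|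
    Quot.lift
      (fun X : {V : Variety k // IrreducibleSpace V.toScheme ∧ V.dim = (n : WithBot ℕ∞)} =>
        K0graded.cls n X.1 X.2.2.le)
      (fun X Y hXY =>
        have := X.2.1
        have := Y.2.1
        K0graded.cls_eq_of_birEquiv X.2.2.le Y.2.2.le hXY) b

theorem birClassHom_single {n : ℕ} {X : Variety k}
    (hX : IrreducibleSpace X.toScheme ∧ X.dim = n) :
    birClassHom k n (Finsupp.single (BirClass.mk X hX) 1) = K0graded.cls n X hX.2.le :=
  (Finsupp.liftAddHom_apply_single _ _ _).trans (one_zsmul _)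

theorem birClassHom_birSingle {n : ℕ} {X : Variety k} [hirr : IrreducibleSpace X.toScheme]
    (hX : X.dim ≤ n) : birClassHom k n (birSingle n X) = K0graded.cls n X hX := by
  rcases hX.eq_or_lt with hdim | hdim
  · rw [birSingle_of_irreducibleSpace ⟨hirr, hdim⟩, birClassHom_single]
  · rw [birSingle_of_dim_ne hdim.ne, map_zero, K0graded.cls_eq_zero hdim]

theorem birClassHom_birCycle (n : ℕ) (X : Variety k) :
    ∀ hX : X.dim ≤ n, birClassHom k n (birCycle n X) = K0graded.cls n X hX := by
  induction X using induction_on_openSubvariety with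
  | hempty X _ =>
    intro _
    rw [birCycle_of_dim_lt (X.dim_lt_of_isEmpty n), map_zero,
      K0graded.cls_eq_zero (X.dim_lt_of_isEmpty n)]
  | hirreducible X _ =>
    intro hX
    rw [birCycle_of_irreducibleSpace hX, birClassHom_birSingle hX]
  | hcut X U hclosed hopen =>
    intro hX
    rw [birCycle_eq_add hX (X.closedι U.compl) (X.openι U) rfl rfl
      (X.range_openι_eq_compl_range_closedι U), map_add,
      hclosed ((X.dim_closedSubvariety_le _).trans hX),
      hopen ((X.dim_openSubvariety_le U).trans hX), ← K0graded.cls_eq_add hX U]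

theorem birClassHom_comp_birCycleHom (k : Type u) [Field k] (n : ℕ) :
    (birClassHom k n).comp (birCycleHom k n) = AddMonoidHom.id _ :=
  K0graded.addHom_ext fun X hX => by
    rw [AddMonoidHom.comp_apply, birCycleHom_cls, birClassHom_birCycle n X hX,
      AddMonoidHom.id_apply]

theorem birCycleHom_comp_birClassHom (k : Type u) [Field k] (n : ℕ) :
    (birCycleHom k n).comp (birClassHom k n) = AddMonoidHom.id _ := by
  refine Finsupp.addHom_ext' fun b => AddMonoidHom.ext_int ?_
  obtain ⟨X, hX, rfl⟩ := b.exists_mk_eq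
  have := hX.1
  simp only [AddMonoidHom.comp_apply, AddMonoidHom.id_apply, Finsupp.singleAddHom_apply]
  rw [birClassHom_single hX, birCycleHom_cls, birCycle_of_irreducibleSpace hX.2.le,
    birSingle_of_irreducibleSpace hX]

end GrothendieckGroup

end Variety

/-- `K_0(V_k^{(n,n-1)})` is a free abelian group with one basis element
for each birational class in `B_n`: there is an isomorphism with `⨁_{B_n} ℤ` sending the
class of a variety `X` of dimension at most `n` to the sum, over the `n`-dimensional
irreducible components of `X`, of the basis elements of their birational classes. -/
theorem K0graded_free_on_birClasses (k : Type u) [Field k] (n : ℕ) :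
    ∃ iso : K0graded k n ≃+ (BirClass k n →₀ ℤ),
      ∀ (X : Variety k) (hX : X.dim ≤ (n : WithBot ℕ∞)) (m : ℕ)
        (C : Fin m → Variety k) (f : ∀ i, (C i).toScheme ⟶ X.toScheme)
        (hC : ∀ i, IrreducibleSpace (C i).toScheme ∧ (C i).dim = (n : WithBot ℕ∞)),
        RealizesComponents n X m C f →
        iso (K0graded.cls n X hX) =
          ∑ i, Finsupp.single (Quot.mk _ ⟨C i, hC i⟩ : BirClass k n) (1 : ℤ) := by
  refine ⟨(birCycleHom k n).toAddEquiv (birClassHom k n) (birClassHom_comp_birCycleHom k n)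
    (birCycleHom_comp_birClassHom k n), fun X hX m C f hC hf => ?_⟩
  have (i : Fin m) : IrreducibleSpace (C i).toScheme := (hC i).1
  calc birCycleHom k n (K0graded.cls n X hX) = birCycle n X := birCycleHom_cls hX
    _ = ∑ i, birSingle n (C i) := hf.birCycle_eq_sum hX
    _ = ∑ i, Finsupp.single (BirClass.mk (C i) (hC i)) 1 :=
        Finset.sum_congr rfl fun i _ => birSingle_of_irreducibleSpace (hC i)
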